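/- Fix an integer l ≥ 1. For a partition λ, the following are equivalent: (1) there is a chain of partitions ∅ = μ_0 ⊆ μ_1 ⊆ ⋯ ⊆ μ_k = λ (inclusion of Young diagrams) such that each difference μ_{t+1} \ μ_t is a border strip of size l; (2) the counts c̄_j(λ) of boxes of λ with content ≡ j (mod l) are equal for all j ∈ ℤ/lℤ (equivalently, each equals |λ|/l). In other words, a partition has empty l-core if and only if its boxes are equidistributed among the l content residue classes. -/

import Mathlib

/-- The number of boxes of the Young diagram `μ` whose content is congruent to
`j` modulo `l`. -/
def contentCountMod (l : ℕ) (μ : YoungDiagram) (j : ZMod l) : ℕ :=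
  (μ.cells.filter (fun c => (((c.1 : ℤ) - (c.2 : ℤ) : ℤ) : ZMod l) = j)).card

/-- Two boxes are adjacent if they differ by `1` in exactly one coordinate. -/
def Adjacent (c d : ℕ × ℕ) : Prop :=
  (c.1 = d.1 ∧ (c.2 + 1 = d.2 ∨ d.2 + 1 = c.2)) ∨
    (c.2 = d.2 ∧ (c.1 + 1 = d.1 ∨ d.1 + 1 = c.1))

/-- A finite set of boxes is connected: any two of its boxes are joined by a path of
boxes of the set in which consecutive boxes are adjacent. -/
def ConnectedCells (D : Finset (ℕ × ℕ)) : Prop :=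
  ∀ c ∈ D, ∀ d ∈ D,
    Relation.ReflTransGen (fun x y => x ∈ D ∧ y ∈ D ∧ Adjacent x y) c d

/-- A finite set of boxes contains no 2×2 square. -/
def NoSquare (D : Finset (ℕ × ℕ)) : Prop :=
  ¬ ∃ a b : ℕ, (a, b) ∈ D ∧ (a + 1, b) ∈ D ∧ (a, b + 1) ∈ D ∧ (a + 1, b + 1) ∈ D

/-- `lam \ μ` is a border strip (rim hook) of size `s`: `μ ⊆ lam`, and the difference
is a nonempty set of `s` boxes containing no 2×2 square and connected. -/
def IsBorderStrip (μ lam : YoungDiagram) (s : ℕ) : Prop :=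
  μ ≤ lam ∧ (lam.cells \ μ.cells).Nonempty ∧ (lam.cells \ μ.cells).card = s ∧
    NoSquare (lam.cells \ μ.cells) ∧ ConnectedCells (lam.cells \ μ.cells)

/-!
Read the boundary of `lam` as a sequence of beads, row `a` giving the bead `a - lam.rowLen a`.
Removing a border strip of size `s` slides a bead `x` to a vacant position `x + s`: the strip is
the set of rim boxes with content in `(x, x + s]`, and the rim is a lattice path along which the
content increases by one at each step.  A border strip of size `l` therefore has contents forming
`l` consecutive integers and adds one box to each residue class modulo `l`.

Conversely, the difference between the counts in the classes `j` and `j + 1` compares the beads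
congruent to `j` with those of the empty partition, so equidistribution makes these equally
numerous.  If no bead could be slid by `l`, every position `≥ bead 0` congruent to `bead 0` would
be occupied; that includes all the beads of the empty partition in this class, and the
negative position `bead 0` in addition.
-/

open Finset Relation

section Residues

variable {l : ℕ} {S : Finset ℤ}

theorem injOn_intCast_zmod_of_ordConnected (hS : (S : Set ℤ).OrdConnected) (hcard : #S ≤ l) :
    Set.InjOn (Int.cast : ℤ → ZMod l) S := by
  intro z hz w hw hzw
  wlog hle : z ≤ w generalizing z w
  · exact (this hw hz hzw.symm (le_of_not_ge hle)).symm
  by_contra hne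
  have hdvd : (l : ℤ) ∣ w - z := (ZMod.intCast_eq_intCast_iff_dvd_sub z w l).1 hzw
  have hgap : (l : ℤ) ≤ w - z := Int.le_of_dvd (by lia) hdvd
  have hsub : Icc z (z + l) ⊆ S := fun v hv ↦
    hS.out hz hw ⟨(mem_Icc.1 hv).1, by linarith [(mem_Icc.1 hv).2]⟩
  have hcount := card_le_card hsub
  rw [Int.card_Icc] at hcount
  lia

theorem card_filter_intCast_zmod_eq_one [NeZero l] (hS : (S : Set ℤ).OrdConnected)
    (hcard : #S = l) (j : ZMod l) : #{z ∈ S | ((z : ℤ) : ZMod l) = j} = 1 := by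
  have hinj := injOn_intCast_zmod_of_ordConnected hS hcard.le
  have hsurj : Set.SurjOn (Int.cast : ℤ → ZMod l) S (univ : Finset (ZMod l)) :=
    surjOn_of_injOn_of_card_le _ (fun _ _ ↦ mem_coe.2 (mem_univ _)) hinj (by simp [hcard])
  obtain ⟨z, hz, rfl⟩ := hsurj (mem_coe.2 (mem_univ j))
  refine card_eq_one.2 ⟨z, eq_singleton_iff_unique_mem.2 ⟨mem_filter.2 ⟨hz, rfl⟩, ?_⟩⟩
  exact fun w hw ↦ hinj (mem_filter.1 hw).1 hz (mem_filter.1 hw).2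

end Residues

/-- The content of a box, with the sign convention row minus column of `contentCountMod`. -/
def boxContent (c : ℕ × ℕ) : ℤ := c.1 - c.2

theorem ConnectedCells.ordConnected_image_boxContent {D : Finset (ℕ × ℕ)}
    (hD : ConnectedCells D) : (D.image boxContent : Set ℤ).OrdConnected := by
  have intermediate_value {c d : ℕ × ℕ} (hc : c ∈ D)
      (hcd : ReflTransGen (fun x y ↦ x ∈ D ∧ y ∈ D ∧ Adjacent x y) c d) {z : ℤ}
      (hz : z ∈ Set.Icc (boxContent c) (boxContent d)) : ∃ e ∈ D, boxContent e = z := by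
    induction hcd with
    | refl => exact ⟨c, hc, le_antisymm hz.1 hz.2⟩
    | @tail e f _ hef ih =>
      obtain ⟨-, hf, hadj⟩ := hef
      by_cases hze : z ≤ boxContent e
      · exact ih ⟨hz.1, hze⟩
      · have hzf := hz.2
        refine ⟨f, hf, ?_⟩
        unfold Adjacent at hadj
        unfold boxContent at *
        lia
  refine ⟨?_⟩
  simp only [coe_image, Set.forall_mem_image, mem_coe]
  exact fun c hc d hd z hz ↦ intermediate_value hc (hD c hc d hd) hz

section Rim

/-- The rim of a Young diagram: the boxes whose diagonal successor lies outside the diagram. -/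
def rim (lam : YoungDiagram) : Finset (ℕ × ℕ) := {c ∈ lam.cells | (c.1 + 1, c.2 + 1) ∉ lam}

variable {lam μ : YoungDiagram} {c d : ℕ × ℕ}

theorem mem_rim : c ∈ rim lam ↔ c ∈ lam ∧ (c.1 + 1, c.2 + 1) ∉ lam := by
  simp [rim]

theorem mem_rim_of_le (hc : c ∈ rim lam) (hd : d ∈ lam) (hcd : c ≤ d) : d ∈ rim lam :=
  mem_rim.2 ⟨hd, fun h ↦ (mem_rim.1 hc).2 <|
    lam.up_left_mem (Nat.succ_le_succ hcd.1) (Nat.succ_le_succ hcd.2) h⟩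

theorem not_lt_and_lt_of_mem_rim (hc : c ∈ rim lam) (hd : d ∈ lam) :
    ¬(c.1 < d.1 ∧ c.2 < d.2) :=
  fun h ↦ (mem_rim.1 hc).2 (lam.up_left_mem h.1 h.2 hd)

theorem injOn_boxContent_rim : Set.InjOn boxContent (rim lam : Set (ℕ × ℕ)) := by
  intro c hc d hd hcd
  have hcd' := not_lt_and_lt_of_mem_rim hc (mem_rim.1 hd).1
  have hdc' := not_lt_and_lt_of_mem_rim hd (mem_rim.1 hc).1
  unfold boxContent at hcd
  exact Prod.ext (by lia) (by lia)

theorem adjacent_of_mem_rim_of_boxContent_eq_add_one (hc : c ∈ rim lam) (hd : d ∈ rim lam)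
    (hcd : boxContent d = boxContent c + 1) : Adjacent c d := by
  have hcd' := not_lt_and_lt_of_mem_rim hc (mem_rim.1 hd).1
  have hdc' := not_lt_and_lt_of_mem_rim hd (mem_rim.1 hc).1
  unfold boxContent at hcd
  unfold Adjacent
  lia

theorem exists_mem_rim_boxContent_eq (hc : c ∈ lam) :
    ∃ d ∈ rim lam, boxContent d = boxContent c := by
  obtain ⟨d, hd, hmax⟩ := exists_max_image {d ∈ lam.cells | boxContent d = boxContent c} Prod.fst
    ⟨c, by simpa using hc⟩
  simp only [mem_filter, YoungDiagram.mem_cells] at hd hmax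
  refine ⟨d, mem_rim.2 ⟨hd.1, fun hsucc ↦ ?_⟩, hd.2⟩
  have hcontent : boxContent (d.1 + 1, d.2 + 1) = boxContent c := by
    rw [← hd.2]
    simp [boxContent]
  exact (Nat.lt_succ_self d.1).not_ge (hmax _ ⟨hsucc, hcontent⟩)

theorem connectedCells_of_subset_rim {D : Finset (ℕ × ℕ)} (hD : D ⊆ rim lam)
    (hord : (D.image boxContent : Set ℤ).OrdConnected) : ConnectedCells D := by
  intro c hc d hd
  set R : ℕ × ℕ → ℕ × ℕ → Prop := fun x y ↦ x ∈ D ∧ y ∈ D ∧ Adjacent x y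
  have hsymm : Std.Symm R := ⟨fun x y ⟨hx, hy, hxy⟩ ↦ ⟨hy, hx, by unfold Adjacent at *; lia⟩⟩
  wlog hle : boxContent c ≤ boxContent d generalizing c d
  · exact (ReflTransGen.stdSymm (r := R)).symm _ _ (this d hd c hc (le_of_not_ge hle))
  have ascend (z : ℤ) (hz : boxContent c ≤ z) : ∀ e ∈ D, boxContent e = z → ReflTransGen R c e := by
    induction z, hz using Int.leInduction with
    | base =>
      intro e he hce
      rw [injOn_boxContent_rim (hD he) (hD hc) hce]
    | succ z hz ih =>
      intro e he hez
      obtain ⟨f, hf, hfz⟩ := mem_image.1 <| mem_coe.1 <|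
        hord.out (mem_coe.2 (mem_image_of_mem _ hc)) (mem_coe.2 (mem_image_of_mem _ he))
          ⟨hz, hez ▸ (lt_add_one z).le⟩
      have hadj := adjacent_of_mem_rim_of_boxContent_eq_add_one (hD hf) (hD he) (by rw [hez, hfz])
      exact (ih f hf hfz).tail ⟨hf, he, hadj⟩
  exact ascend _ hle d hd rfl

theorem noSquare_sdiff_iff_subset_rim :
    NoSquare (lam.cells \ μ.cells) ↔ lam.cells \ μ.cells ⊆ rim lam := by
  constructor
  · intro hsq ⟨a, b⟩ hab
    simp only [mem_sdiff, YoungDiagram.mem_cells] at hab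
    refine mem_rim.2 ⟨hab.1, fun hsucc ↦ hsq ⟨a, b, ?_⟩⟩
    have mem_sdiff_of_between {i j : ℕ} (hi : a ≤ i ∧ i ≤ a + 1) (hj : b ≤ j ∧ j ≤ b + 1) :
        (i, j) ∈ lam.cells \ μ.cells := by
      simp only [mem_sdiff, YoungDiagram.mem_cells]
      exact ⟨lam.up_left_mem hi.2 hj.2 hsucc, fun h ↦ hab.2 (μ.up_left_mem hi.1 hj.1 h)⟩
    refine ⟨?_, ?_, ?_, ?_⟩ <;> exact mem_sdiff_of_between (by lia) (by lia)
  · rintro hsub ⟨a, b, hab, -, -, hsucc⟩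
    exact (mem_rim.1 (hsub hab)).2 (mem_rim.1 (hsub hsucc)).1

theorem isBorderStrip_iff_subset_rim {s : ℕ} :
    IsBorderStrip μ lam s ↔ μ ≤ lam ∧ (lam.cells \ μ.cells).Nonempty ∧
      #(lam.cells \ μ.cells) = s ∧ lam.cells \ μ.cells ⊆ rim lam ∧
        ((lam.cells \ μ.cells).image boxContent : Set ℤ).OrdConnected := by
  simp only [IsBorderStrip, noSquare_sdiff_iff_subset_rim]
  refine and_congr_right' <| and_congr_right' <| and_congr_right' <| and_congr_right fun hrim ↦ ?_
  exact ⟨ConnectedCells.ordConnected_image_boxContent, connectedCells_of_subset_rim hrim⟩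

theorem IsBorderStrip.card_cells_lt {s : ℕ} (h : IsBorderStrip μ lam s) :
    #μ.cells < #lam.cells := by
  have hsum := card_sdiff_add_card_eq_card (YoungDiagram.cells_subset_iff.2 h.1)
  have hpos := h.2.1.card_pos
  lia

theorem IsBorderStrip.contentCountMod_eq_add_one {l : ℕ} (h : IsBorderStrip μ lam l)
    (j : ZMod l) : contentCountMod l lam j = contentCountMod l μ j + 1 := by
  obtain ⟨hle, hne, hcard, hrim, hord⟩ := isBorderStrip_iff_subset_rim.1 h
  have : NeZero l := ⟨hcard ▸ hne.card_pos.ne'⟩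
  have hinj : Set.InjOn boxContent (lam.cells \ μ.cells : Finset (ℕ × ℕ)) :=
    injOn_boxContent_rim.mono (coe_subset.2 hrim)
  have hstrip : #{c ∈ lam.cells \ μ.cells | (boxContent c : ZMod l) = j} = 1 := by
    have himage := card_filter_intCast_zmod_eq_one hord (by rw [card_image_of_injOn hinj, hcard]) j
    rwa [filter_image, card_image_of_injOn (hinj.mono (coe_subset.2 (filter_subset _ _)))] at himage
  calc contentCountMod l lam j
      = #{c ∈ μ.cells ∪ lam.cells \ μ.cells | (boxContent c : ZMod l) = j} := by
        rw [union_sdiff_of_subset (YoungDiagram.cells_subset_iff.2 hle)]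
        rfl
    _ = #{c ∈ μ.cells | (boxContent c : ZMod l) = j} + 1 := by
        rw [filter_union, card_union_of_disjoint (disjoint_filter_filter disjoint_sdiff), hstrip]
    _ = contentCountMod l μ j + 1 := rfl

end Rim

section Beads

/-- The bead of row `a`: the content of the first box to the right of the row.  With contents
taken as row minus column, this is the negative of the usual beta-number `λ_a - a`. -/
def bead (lam : YoungDiagram) (a : ℕ) : ℤ := boxContent (a, lam.rowLen a)

variable {lam : YoungDiagram} {a : ℕ} {c : ℕ × ℕ}

theorem bead_eq_of_colLen_le (ha : lam.colLen 0 ≤ a) : bead lam a = a := by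
  have hrow : lam.rowLen a = 0 := by
    by_contra hne
    have hmem : (a, 0) ∈ lam := YoungDiagram.mem_iff_lt_rowLen.2 (Nat.pos_of_ne_zero hne)
    exact ha.not_gt (YoungDiagram.mem_iff_lt_colLen.1 hmem)
  simp [bead, boxContent, hrow]

theorem lt_colLen_of_bead_lt (ha : bead lam a < lam.colLen 0) : a < lam.colLen 0 := by
  by_contra! hge
  rw [bead_eq_of_colLen_le hge] at ha
  exact hge.not_gt (Nat.cast_lt.1 ha)

theorem bead_zero_le (lam : YoungDiagram) (a : ℕ) : bead lam 0 ≤ bead lam a := by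
  have hanti := lam.rowLen_anti 0 a a.zero_le
  simp only [bead, boxContent]
  lia

theorem bead_zero_neg (hne : lam ≠ ⊥) : bead lam 0 < 0 := by
  obtain ⟨⟨i, j⟩, hij⟩ : lam.cells.Nonempty :=
    nonempty_iff_ne_empty.2 fun h ↦ hne (YoungDiagram.ext h)
  have hrow : 0 < lam.rowLen 0 := YoungDiagram.mem_iff_lt_rowLen.1 <|
    lam.up_left_mem i.zero_le j.zero_le (YoungDiagram.mem_cells _ |>.1 hij)
  simp only [bead, boxContent]
  lia

theorem boxContent_mem_range_bead_of_mem_below (hc : c ∈ rim lam) (hbelow : (c.1 + 1, c.2) ∈ lam) :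
    boxContent c ∈ Set.range (bead lam) := by
  have hend := (mem_rim.1 hc).2
  rw [YoungDiagram.mem_iff_lt_rowLen] at hbelow hend
  refine ⟨c.1 + 1, ?_⟩
  simp only [bead, boxContent]
  lia

theorem boxContent_sub_one_notMem_range_bead_of_mem_right (hc : c ∈ rim lam)
    (hright : (c.1, c.2 + 1) ∈ lam) : boxContent c - 1 ∉ Set.range (bead lam) := by
  rintro ⟨b, hb⟩
  have hend := (mem_rim.1 hc).2
  rw [YoungDiagram.mem_iff_lt_rowLen] at hright hend
  simp only [bead, boxContent] at hb
  rcases le_or_gt b c.1 with hbc | hbc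
  · have hanti := lam.rowLen_anti b c.1 hbc
    lia
  · have hanti := lam.rowLen_anti (c.1 + 1) b hbc
    lia

theorem exists_mem_rim_boxContent_eq_of_lt {y z : ℤ} (hz : bead lam 0 < z)
    (hy : y ∉ Set.range (bead lam)) (hzy : z ≤ y) : ∃ c ∈ rim lam, boxContent c = z := by
  have hy_lt : y < lam.colLen 0 := by
    by_contra! hge
    exact hy ⟨y.toNat, by rw [bead_eq_of_colLen_le (by lia)]; lia⟩
  have haxis : (z.toNat, (-z).toNat) ∈ lam := by
    rcases le_total 0 z with hz0 | hz0
    · rw [Int.toNat_of_nonpos (neg_nonpos.2 hz0), YoungDiagram.mem_iff_lt_colLen]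
      lia
    · rw [Int.toNat_of_nonpos hz0, YoungDiagram.mem_iff_lt_rowLen]
      simp only [bead, boxContent] at hz
      lia
  obtain ⟨c, hc, hcz⟩ := exists_mem_rim_boxContent_eq haxis
  refine ⟨c, hc, hcz.trans ?_⟩
  simp only [boxContent]
  lia

end Beads

section StripRemoval

/-- The boxes of the rim with content in `(x, y]`.  This is the border strip whose removal slides
a bead at `x` to `y`, provided `y` is vacant. -/
def rimSegment (lam : YoungDiagram) (x y : ℤ) : Finset (ℕ × ℕ) :=
  {c ∈ rim lam | x < boxContent c ∧ boxContent c ≤ y}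

variable {lam : YoungDiagram} {x y : ℤ} {c d : ℕ × ℕ}

theorem mem_rimSegment : c ∈ rimSegment lam x y ↔ c ∈ rim lam ∧ x < boxContent c ∧
    boxContent c ≤ y := by
  simp [rimSegment]

theorem image_boxContent_rimSegment (hx : x ∈ Set.range (bead lam))
    (hy : y ∉ Set.range (bead lam)) : (rimSegment lam x y).image boxContent = Ioc x y := by
  ext z
  simp only [mem_image, mem_rimSegment, mem_Ioc]
  constructor
  · rintro ⟨c, ⟨-, hc⟩, rfl⟩
    exact hc
  · rintro ⟨hxz, hzy⟩
    obtain ⟨a, rfl⟩ := hx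
    obtain ⟨c, hc, rfl⟩ :=
      exists_mem_rim_boxContent_eq_of_lt ((bead_zero_le lam a).trans_lt hxz) hy hzy
    exact ⟨c, ⟨hc, hxz, hzy⟩, rfl⟩

theorem below_mem_rimSegment (hy : y ∉ Set.range (bead lam)) (hc : c ∈ rimSegment lam x y)
    (hbelow : (c.1 + 1, c.2) ∈ lam) : (c.1 + 1, c.2) ∈ rimSegment lam x y := by
  obtain ⟨hrim, hxc, hcy⟩ := mem_rimSegment.1 hc
  have hne : boxContent c ≠ y := fun h ↦
    hy (h ▸ boxContent_mem_range_bead_of_mem_below hrim hbelow)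
  refine mem_rimSegment.2 ⟨mem_rim_of_le hrim hbelow ⟨Nat.le_succ _, le_rfl⟩, ?_⟩
  simp only [boxContent] at *
  lia

theorem right_mem_rimSegment (hx : x ∈ Set.range (bead lam)) (hc : c ∈ rimSegment lam x y)
    (hright : (c.1, c.2 + 1) ∈ lam) : (c.1, c.2 + 1) ∈ rimSegment lam x y := by
  obtain ⟨hrim, hxc, hcy⟩ := mem_rimSegment.1 hc
  have hne : boxContent c - 1 ≠ x := fun h ↦
    boxContent_sub_one_notMem_range_bead_of_mem_right hrim hright (h ▸ hx)
  refine mem_rimSegment.2 ⟨mem_rim_of_le hrim hright ⟨le_rfl, Nat.le_succ _⟩, ?_⟩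
  simp only [boxContent] at *
  lia

theorem mem_rimSegment_of_le (hx : x ∈ Set.range (bead lam)) (hy : y ∉ Set.range (bead lam))
    (hc : c ∈ rimSegment lam x y) (hd : d ∈ lam) (hcd : c ≤ d) : d ∈ rimSegment lam x y := by
  obtain ⟨i, j⟩ := d
  obtain ⟨hi, hj⟩ : c.1 ≤ i ∧ c.2 ≤ j := hcd
  have hcol : (i, c.2) ∈ rimSegment lam x y := by
    replace hd : (i, c.2) ∈ lam := lam.up_left_mem le_rfl hj hd
    induction i, hi using Nat.le_induction with
    | base => exact hc
    | succ i _ ih =>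
      exact below_mem_rimSegment hy (ih (lam.up_left_mem i.le_succ le_rfl hd)) hd
  induction j, hj using Nat.le_induction with
  | base => exact hcol
  | succ j _ ih => exact right_mem_rimSegment hx (ih (lam.up_left_mem le_rfl j.le_succ hd)) hd

theorem isLowerSet_cells_sdiff_rimSegment (hx : x ∈ Set.range (bead lam))
    (hy : y ∉ Set.range (bead lam)) :
    IsLowerSet ((lam.cells \ rimSegment lam x y : Finset (ℕ × ℕ)) : Set (ℕ × ℕ)) := by
  intro d c hcd hd
  simp only [mem_coe, mem_sdiff, YoungDiagram.mem_cells] at hd ⊢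
  exact ⟨lam.up_left_mem hcd.1 hcd.2 hd.1,
    fun hc ↦ hd.2 (mem_rimSegment_of_le hx hy hc hd.1 hcd)⟩

theorem exists_isBorderStrip_of_bead_add_notMem {a s : ℕ}
    (ha : bead lam a + s ∉ Set.range (bead lam)) : ∃ μ, IsBorderStrip μ lam s := by
  have hbead : bead lam a ∈ Set.range (bead lam) := ⟨a, rfl⟩
  set D := rimSegment lam (bead lam a) (bead lam a + s)
  have hrim : D ⊆ rim lam := filter_subset _ _
  have himage : D.image boxContent = Ioc (bead lam a) (bead lam a + s) :=
    image_boxContent_rimSegment hbead ha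
  have hcard : #D = s := by
    rw [← card_image_of_injOn (injOn_boxContent_rim.mono (coe_subset.2 hrim)), himage,
      Int.card_Ioc, add_sub_cancel_left, Int.toNat_natCast]
  have hs : s ≠ 0 := by
    rintro rfl
    exact ha (by simp)
  let μ : YoungDiagram :=
    ⟨lam.cells \ D, isLowerSet_cells_sdiff_rimSegment hbead ha⟩
  have hsdiff : lam.cells \ μ.cells = D :=
    Finset.sdiff_sdiff_eq_self (hrim.trans (filter_subset _ _))
  refine ⟨μ, isBorderStrip_iff_subset_rim.2 ?_⟩
  rw [hsdiff, himage, coe_Ioc]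
  exact ⟨YoungDiagram.cells_subset_iff.1 sdiff_subset, card_pos.1 (by lia), hcard, hrim,
    Set.ordConnected_Ioc⟩

end StripRemoval

section Counting

variable {l : ℕ} {lam : YoungDiagram}

theorem contentCountMod_eq_sum_rows (l : ℕ) (lam : YoungDiagram) (j : ZMod l) :
    contentCountMod l lam j =
      ∑ a ∈ range (lam.colLen 0), ∑ b ∈ range (lam.rowLen a),
        if (boxContent (a, b) : ZMod l) = j then 1 else 0 := by
  have hcells (c : ℕ × ℕ) :
      c ∈ lam.cells ↔ c.1 ∈ range (lam.colLen 0) ∧ c.2 ∈ range (lam.rowLen c.1) := by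
    simp only [YoungDiagram.mem_cells, mem_range, ← YoungDiagram.mem_iff_lt_rowLen,
      ← YoungDiagram.mem_iff_lt_colLen]
    exact ⟨fun hc ↦ ⟨lam.up_left_mem le_rfl c.2.zero_le hc, hc⟩, And.right⟩
  exact (card_filter _ _).trans (sum_finset_product _ _ _ hcells)

theorem sum_range_row_sub_shift (j : ZMod l) (a m : ℕ) :
    ∑ b ∈ range m, ((if (boxContent (a, b) : ZMod l) = j then 1 else 0) -
      (if (boxContent (a, b) : ZMod l) = j + 1 then 1 else 0) : ℤ) =
      (if (a : ZMod l) = j then 1 else 0) -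
        (if (boxContent (a, m) : ZMod l) = j then 1 else 0) := by
  have hshift (b : ℕ) :
      (boxContent (a, b) : ZMod l) = j + 1 ↔ (boxContent (a, b + 1) : ZMod l) = j := by
    rw [← sub_eq_iff_eq_add]
    simp [boxContent, sub_sub]
  simp only [hshift]
  simpa [boxContent] using
    sum_range_sub' (fun b ↦ if (boxContent (a, b) : ZMod l) = j then (1 : ℤ) else 0) m

theorem contentCountMod_sub_contentCountMod_add_one (l : ℕ) (lam : YoungDiagram) (j : ZMod l) :
    (contentCountMod l lam j : ℤ) - contentCountMod l lam (j + 1) =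
      #{a ∈ range (lam.colLen 0) | ((a : ℕ) : ZMod l) = j} -
        #{a ∈ range (lam.colLen 0) | (bead lam a : ZMod l) = j} := by
  simp only [contentCountMod_eq_sum_rows, card_filter, Nat.cast_sum, Nat.cast_ite, Nat.cast_one,
    Nat.cast_zero, ← sum_sub_distrib, sum_range_row_sub_shift]
  rfl

theorem mem_range_bead_of_intCast_zmod_eq {x z : ℤ}
    (hclosed : ∀ a, bead lam a + l ∈ Set.range (bead lam)) (hx : x ∈ Set.range (bead lam))
    (hxz : x ≤ z) (hmod : (x : ZMod l) = z) : z ∈ Set.range (bead lam) := by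
  have hprog (k : ℕ) : x + l * k ∈ Set.range (bead lam) := by
    induction k with
    | zero => simpa using hx
    | succ k ih =>
      obtain ⟨b, hb⟩ := ih
      simpa only [hb, add_assoc, Nat.cast_succ, mul_add_one] using hclosed b
  obtain ⟨k, hk⟩ := (ZMod.intCast_eq_intCast_iff_dvd_sub x z l).1 hmod
  rcases le_total 0 k with hk_nonneg | hk_nonpos
  · rw [← add_sub_cancel x z, hk, ← Int.toNat_of_nonneg hk_nonneg]
    exact hprog _
  · have hprod := mul_nonpos_of_nonneg_of_nonpos (Int.natCast_nonneg l) hk_nonpos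
    rwa [show z = x by lia]

theorem exists_bead_add_notMem_range (hne : lam ≠ ⊥)
    (heq : ∀ j j' : ZMod l, contentCountMod l lam j = contentCountMod l lam j') :
    ∃ a, bead lam a + l ∉ Set.range (bead lam) := by
  by_contra! hclosed
  have hneg := bead_zero_neg hne
  set j : ZMod l := ((bead lam 0 : ℤ) : ZMod l)
  set S : Finset ℕ := {a ∈ range (lam.colLen 0) | ((a : ℕ) : ZMod l) = j}
  set T : Finset ℕ := {a ∈ range (lam.colLen 0) | (bead lam a : ZMod l) = j}
  have hcard : #S = #T := by
    have hdiff := contentCountMod_sub_contentCountMod_add_one l lam j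
    rw [heq j (j + 1), sub_self] at hdiff
    lia
  have mem_image_T {b : ℕ} (hb : bead lam b < lam.colLen 0) (hbj : (bead lam b : ZMod l) = j) :
      bead lam b ∈ T.image (bead lam) :=
    mem_image_of_mem _ (mem_filter.2 ⟨mem_range.2 (lt_colLen_of_bead_lt hb), hbj⟩)
  have hsub : S.image (Nat.cast : ℕ → ℤ) ⊆ T.image (bead lam) := by
    intro z hz
    obtain ⟨a, ha, rfl⟩ := mem_image.1 hz
    obtain ⟨han, haj⟩ := mem_filter.1 ha
    rw [← Int.cast_natCast] at haj
    obtain ⟨b, hb⟩ := mem_range_bead_of_intCast_zmod_eq hclosed ⟨0, rfl⟩ (by lia) haj.symm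
    rw [← hb] at haj ⊢
    exact mem_image_T (by rw [hb]; exact_mod_cast mem_range.1 han) haj
  have hssub : S.image (Nat.cast : ℕ → ℤ) ⊂ T.image (bead lam) := by
    refine (ssubset_iff_of_subset hsub).2 ⟨bead lam 0, mem_image_T (by lia) rfl, fun h ↦ ?_⟩
    obtain ⟨a, -, ha⟩ := mem_image.1 h
    lia
  have hcount := (card_lt_card hssub).trans_le card_image_le
  rw [card_image_of_injective _ Nat.cast_injective] at hcount
  exact hcount.ne hcard

end Counting

theorem exists_fin_chain_iff_reflTransGen {α : Type*} {r : α → α → Prop} {x y : α} :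
    (∃ (k : ℕ) (f : Fin (k + 1) → α), f 0 = x ∧ f (Fin.last k) = y ∧
      ∀ t : Fin k, r (f t.castSucc) (f t.succ)) ↔ ReflTransGen r x y := by
  constructor
  · rintro ⟨k, f, rfl, rfl, hstep⟩
    have hreach (t : Fin (k + 1)) : ReflTransGen r (f 0) (f t) := by
      induction t using Fin.induction with
      | zero => exact .refl
      | succ t ih => exact ih.tail (hstep t)
    exact hreach _
  · intro h
    suffices ∃ p : RelSeries {q : α × α | r q.1 q.2}, p.head = x ∧ p.last = y from
      this.elim fun p hp ↦ ⟨p.length, p, hp.1, hp.2, p.step⟩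
    induction h with
    | refl => exact ⟨.singleton _ x, rfl, rfl⟩
    | tail _ hyz ih =>
      obtain ⟨p, rfl, rfl⟩ := ih
      exact ⟨p.snoc _ hyz, p.head_snoc _ _, p.last_snoc _ _⟩

section Equidistribution

variable {l : ℕ} {lam : YoungDiagram}

theorem contentCountMod_eq_of_reflTransGen_isBorderStrip
    (h : ReflTransGen (IsBorderStrip · · l) ⊥ lam) (j j' : ZMod l) :
    contentCountMod l lam j = contentCountMod l lam j' := by
  induction h with
  | refl => simp [contentCountMod]
  | tail _ hstrip ih =>
    rw [hstrip.contentCountMod_eq_add_one, hstrip.contentCountMod_eq_add_one, ih]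

theorem reflTransGen_isBorderStrip_of_contentCountMod_eq
    (heq : ∀ j j' : ZMod l, contentCountMod l lam j = contentCountMod l lam j') :
    ReflTransGen (IsBorderStrip · · l) ⊥ lam := by
  induction hsize : #lam.cells using Nat.strong_induction_on generalizing lam with
  | _ n ih =>
    rcases eq_or_ne lam ⊥ with rfl | hne
    · exact .refl
    obtain ⟨a, ha⟩ := exists_bead_add_notMem_range hne heq
    obtain ⟨μ, hμ⟩ := exists_isBorderStrip_of_bead_add_notMem ha
    have heqμ (j j' : ZMod l) : contentCountMod l μ j = contentCountMod l μ j' := by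
      simpa only [hμ.contentCountMod_eq_add_one, Nat.add_right_cancel_iff] using heq j j'
    exact (ih _ (hsize ▸ hμ.card_cells_lt) heqμ rfl).tail hμ

end Equidistribution

/-- A partition can be built from the empty partition by successively adding border
strips of size `l` if and only if its boxes are equidistributed among the `l`
content residue classes mod `l` (i.e. it has empty `l`-core). -/
theorem emptyCore_iff_equidistributed (l : ℕ) [NeZero l] (lam : YoungDiagram) :
    (∃ (k : ℕ) (μ : Fin (k + 1) → YoungDiagram),
        μ 0 = ⊥ ∧ μ (Fin.last k) = lam ∧
          ∀ t : Fin k, IsBorderStrip (μ t.castSucc) (μ t.succ) l) ↔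
      ∀ j j' : ZMod l, contentCountMod l lam j = contentCountMod l lam j' := by
  rw [exists_fin_chain_iff_reflTransGen (r := (IsBorderStrip · · l))]
  exact ⟨contentCountMod_eq_of_reflTransGen_isBorderStrip,
    reflTransGen_isBorderStrip_of_contentCountMod_eq⟩
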